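/- arXiv:2507.11009 — 5 statements merged into one kernel-verified Lean document; each statement's English description precedes it below -/
import Mathlib

section
/- Let u be a positive divisor of q−1, and let i, e ∈ {1, ..., n̄} with e < i. Then rank_B({ζ^{u(t + s·r̄^{e−1})} : t ∈ T_i, s ∈ {0, ..., r̄−1}}) ≤ l/r̄ + (r̄−1)·l/r̄^{i−e+1}. -/
/-!
If the digit of `t` at position `a` is zero, then `t % r ^ (a + 1) < r ^ a`. Adding `s * r ^ d` to
this low part, and leaving the multiple of `r ^ (a + 1)` as it is, shows that the exponents
`t + s * r ^ d` lie in at most `r ^ (n - a - 1)` intervals of length `r ^ a + (r - 1) * r ^ d`.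
The rank is at most the number of exponents.
-/

open Finset

/-- The set of numbers with `n` digits in base `r` whose digit at position `a` is zero. Positions
are counted from `0`, so this is the set `T_i` for `i = a + 1`. -/
def zeroDigitSet (r n a : ℕ) : Finset ℕ := {t ∈ range (r ^ n) | t / r ^ a % r = 0}

theorem mem_zeroDigitSet {r n a t : ℕ} :
    t ∈ zeroDigitSet r n a ↔ t < r ^ n ∧ t / r ^ a % r = 0 := by
  rw [zeroDigitSet, mem_filter, mem_range]

theorem mod_pow_succ_lt_pow_of_digit_eq_zero {r a t : ℕ} (hr : 0 < r) (ht : t / r ^ a % r = 0) :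
    t % r ^ (a + 1) < r ^ a := by
  rw [Nat.mod_pow_succ, ht, mul_zero, add_zero]
  exact Nat.mod_lt _ (pow_pos hr a)

theorem image₂_zeroDigitSet_subset (r a m d : ℕ) :
    image₂ (fun t s ↦ t + s * r ^ d) (zeroDigitSet r (a + 1 + m) a) (range r) ⊆
      image₂ (fun b c ↦ r ^ (a + 1) * b + c)
        (range (r ^ m)) (range (r ^ a + (r - 1) * r ^ d)) := by
  refine image₂_subset_iff.2 fun t ht s hs ↦ ?_
  obtain ⟨ht_lt, ht_digit⟩ := mem_zeroDigitSet.1 ht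
  rw [mem_range] at hs
  have high_lt : t / r ^ (a + 1) < r ^ m := Nat.div_lt_of_lt_mul (pow_add r (a + 1) m ▸ ht_lt)
  have low_lt : t % r ^ (a + 1) + s * r ^ d < r ^ a + (r - 1) * r ^ d :=
    add_lt_add_of_lt_of_le (mod_pow_succ_lt_pow_of_digit_eq_zero (by omega) ht_digit)
      (Nat.mul_le_mul_right _ (by omega))
  refine mem_image₂.2 ⟨_, mem_range.2 high_lt, _, mem_range.2 low_lt, ?_⟩
  rw [← add_assoc, Nat.div_add_mod]

theorem card_image₂_zeroDigitSet_le (r a m d : ℕ) :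
    #(image₂ (fun t s ↦ t + s * r ^ d) (zeroDigitSet r (a + 1 + m) a) (range r)) ≤
      r ^ m * (r ^ a + (r - 1) * r ^ d) := by
  simpa only [card_range] using
    (card_le_card (image₂_zeroDigitSet_subset r a m d)).trans (card_image₂_le _ _ _)

theorem finrank_span_image_finset_le_card {R M ι : Type*} [Semiring R] [StrongRankCondition R]
    [AddCommMonoid M] [Module R M] (v : ι → M) (s : Finset ι) :
    Module.finrank R (Submodule.span R (v '' s)) ≤ #s := by
  classical
  rw [← coe_image]
  exact (finrank_span_finset_le_card _).trans card_image_le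

theorem setOf_eq_image_image₂_zeroDigitSet {M : Type*} (v : ℕ → M) (r n a d : ℕ) :
    {x | ∃ t, (t < r ^ n ∧ t / r ^ a % r = 0) ∧ ∃ s < r, x = v (t + s * r ^ d)} =
      v '' image₂ (fun t s ↦ t + s * r ^ d) (zeroDigitSet r n a) (range r) := by
  ext x
  simp [mem_zeroDigitSet, eq_comm, and_assoc]

theorem stmt_5_general {R M : Type*} [Semiring R] [StrongRankCondition R] [AddCommMonoid M]
    [Module R M] (v : ℕ → M) {n r i e : ℕ} (hr : 0 < r) (he : 1 ≤ e) (hei : e ≤ i) (hin : i ≤ n) :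
    (Module.finrank R (Submodule.span R
        {x | ∃ t, (t < r ^ n ∧ t / r ^ (i - 1) % r = 0) ∧
          ∃ s < r, x = v (t + s * r ^ (e - 1))}) : ℝ)
      ≤ (r : ℝ) ^ n / r + ((r : ℝ) - 1) * (r : ℝ) ^ n / (r : ℝ) ^ (i - e + 1) := by
  obtain ⟨d, rfl⟩ := Nat.exists_eq_add_of_le' he
  obtain ⟨k, rfl⟩ := Nat.exists_eq_add_of_le hei
  obtain ⟨m, rfl⟩ := Nat.exists_eq_add_of_le hin
  rw [Nat.add_sub_cancel_left, Nat.add_sub_cancel, add_right_comm d 1 k, Nat.add_sub_cancel,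
    setOf_eq_image_image₂_zeroDigitSet]
  calc _ ≤ ((r ^ m * (r ^ (d + k) + (r - 1) * r ^ d) : ℕ) : ℝ) := Nat.cast_le.2 <|
        (finrank_span_image_finset_le_card _ _).trans (card_image₂_zeroDigitSet_le r (d + k) m d)
    _ = _ := by
      have hr_ne : (r : ℝ) ≠ 0 := by positivity
      push_cast [Nat.cast_sub (Nat.one_le_of_lt hr)]
      field_simp
      ring

/-- In the setting of Construction 1 (`B = GF(q)`, `l = r^n`,
`F = GF(q^l)`, `ζ` primitive in `F`, `u > 0` a divisor of `q-1`,
`T_i = {t < l : (t / r^(i-1)) % r = 0}`), if `e < i` (both in `{1, …, n}`) then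
`rank_B({ζ^{u(t + s·r^(e-1))} : t ∈ T_i, s ∈ {0,…,r-1}}) ≤ l/r + (r-1)·l/r^(i-e+1)`. -/
theorem stmt_5 (q n r l : ℕ) (hn : 2 ≤ n) (hr : 2 ≤ r) (hl : l = r ^ n)
    (B F : Type*) [Field B] [Field F] [Fintype B] [Fintype F] [Algebra B F]
    (hq : Fintype.card B = q) (hrk : Module.finrank B F = l)
    (ζ : F) (hζ : orderOf ζ = q ^ l - 1)
    (u : ℕ) (hu : 0 < u) (hdvd : u ∣ q - 1)
    (i e : ℕ) (hi : i ∈ Finset.Icc 1 n) (he : e ∈ Finset.Icc 1 n) (hei : e < i) :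
    ((Module.finrank B ↥(Submodule.span B
        {x : F | ∃ t, (t < l ∧ t / r ^ (i - 1) % r = 0) ∧
          ∃ s < r, x = ζ ^ (u * (t + s * r ^ (e - 1)))}) : ℕ) : ℝ)
      ≤ (l : ℝ) / r + ((r : ℝ) - 1) * l / r ^ (i - e + 1) := by
  subst hl
  exact_mod_cast stmt_5_general (R := B) (fun k ↦ ζ ^ (u * k)) (by omega)
    (mem_Icc.1 he).1 hei.le (mem_Icc.1 hi).2
end

section
/- Let u be a positive divisor of q−1 and y ∈ {1, ..., m}. Then the element γ = ζ^{u·∏_{j=1}^{y−1} p_j} of F satisfies B(γ) = F; equivalently, the minimal polynomial of γ over B has degree l, so the powers 1, γ, γ^2, ..., γ^{l−1} are linearly independent over B. -/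
/-- `∏_{j=1}^{y-1} p_j` (the empty product is `1`). -/
def bigP (p : ℕ → ℕ) (y : ℕ) : ℕ := ∏ j ∈ Finset.Icc 1 (y - 1), p j

/-!
Every proper intermediate field of `F / B` has degree at most `l / 2`, hence at most `q ^ (l / 2)`
elements, so an element of multiplicative order at least `q ^ (l / 2)` generates `F` over `B`. For a
primitive `ζ` and `0 < k ≤ q ^ (l / 2)`, the order of `ζ ^ k` is at least `(q ^ l - 1) / k`, which
forces it to be at least `q ^ (l / 2)`. Finally `2 * (p_1 ⋯ p_{y-1}) ≤ p_1 ⋯ p_y ≤ l` and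
`u ≤ q - 1`, so `u * (p_1 ⋯ p_{y-1}) ≤ (q - 1) * (l / 2) < q ^ (l / 2)` by Bernoulli's inequality.
-/

open IntermediateField Module

theorem orderOf_le_orderOf_pow_mul {G : Type*} [Monoid G] (x : G) {k : ℕ} (hk : k ≠ 0) :
    orderOf x ≤ orderOf (x ^ k) * k :=
  calc orderOf x = orderOf x / (orderOf x).gcd k * (orderOf x).gcd k :=
        (Nat.div_mul_cancel (Nat.gcd_dvd_left _ _)).symm
    _ = orderOf (x ^ k) * (orderOf x).gcd k := by rw [orderOf_pow' x hk]
    _ ≤ orderOf (x ^ k) * k := Nat.mul_le_mul_left _ (Nat.gcd_le_right _ hk.pos)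

theorem mul_lt_pow_of_lt {u q : ℕ} (hu : u < q) (s : ℕ) : u * s < q ^ s :=
  calc u * s < 1 + s * u := by rw [mul_comm, add_comm]; exact Nat.lt_succ_self _
    _ ≤ (1 + u) ^ s := one_add_le_pow_of_two_add_nonneg (Nat.zero_le _) s
    _ ≤ q ^ s := Nat.pow_le_pow_left (by omega) s

theorem le_of_mul_self_le_of_sub_one_le_mul {N a e k : ℕ} (hN : 1 < N) (ha : a * a ≤ N)
    (hk : k ≤ a) (h : N - 1 ≤ e * k) : a ≤ e := by
  by_contra! e_lt_a
  have N_sub_one_le : N - 1 ≤ e * a := h.trans (Nat.mul_le_mul_left e hk)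
  have mul_add_le : e * a + a ≤ N :=
    calc e * a + a = (e + 1) * a := (add_one_mul e a).symm
      _ ≤ a * a := Nat.mul_le_mul_right a e_lt_a
      _ ≤ N := ha
  obtain rfl : e = 0 := by omega
  omega

section FieldExtension

variable {B F : Type*} [Field B] [Field F] [Algebra B F]

theorem two_mul_finrank_le_of_ne_top [FiniteDimensional B F] {K : IntermediateField B F}
    (hK : K ≠ ⊤) : 2 * finrank B K ≤ finrank B F := by
  have one_lt_finrank : 1 < finrank K F :=
    lt_of_le_of_ne' finrank_pos fun h => hK (finrank_eq_one_iff_eq_top.mp h)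
  calc 2 * finrank B K ≤ finrank K F * finrank B K := Nat.mul_le_mul_right _ one_lt_finrank
    _ = finrank B F := by rw [mul_comm, finrank_mul_finrank]

theorem natDegree_minpoly_and_algebra_adjoin_of_adjoin_simple_eq_top [FiniteDimensional B F] {x : F}
    (hx : B⟮x⟯ = ⊤) : (minpoly B x).natDegree = finrank B F ∧ Algebra.adjoin B {x} = ⊤ :=
  ⟨(Field.primitive_element_iff_minpoly_natDegree_eq B x).mp hx,
    (adjoin_simple_eq_top_iff_of_isAlgebraic (Algebra.IsAlgebraic.isAlgebraic x)).mp hx⟩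

variable [Finite F]

theorem orderOf_lt_pow_finrank_of_mem {K : IntermediateField B F} {x : F} (hx : x ∈ K) :
    orderOf x < Nat.card B ^ finrank B K :=
  calc orderOf x = orderOf (⟨x, hx⟩ : K) :=
        orderOf_injective K.val.toMonoidHom K.val.injective ⟨x, hx⟩
    _ < Nat.card K := orderOf_lt_card _
    _ = Nat.card B ^ finrank B K := natCard_eq_pow_finrank

theorem adjoin_simple_eq_top_of_pow_le_orderOf {x : F}
    (hx : Nat.card B ^ (finrank B F / 2) ≤ orderOf x) : B⟮x⟯ = ⊤ := by
  have : Finite B := .of_injective _ (algebraMap B F).injective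
  by_contra hne
  have finrank_le : finrank B B⟮x⟯ ≤ finrank B F / 2 := by
    have := two_mul_finrank_le_of_ne_top hne
    omega
  refine hx.not_gt ?_
  calc orderOf x < Nat.card B ^ finrank B B⟮x⟯ :=
        orderOf_lt_pow_finrank_of_mem (mem_adjoin_simple_self B x)
    _ ≤ Nat.card B ^ (finrank B F / 2) := Nat.pow_le_pow_right Nat.card_pos finrank_le

end FieldExtension

/-- The bound on `k` is sharp: if `l = 2 * h`, then `ζ ^ (q ^ h + 1)` lies in the subfield with
`q ^ h` elements. -/
theorem stmt_11_general {B F : Type*} [Field B] [Field F] [Finite F] [Algebra B F] {q l : ℕ}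
    (hq : Nat.card B = q) (hrk : finrank B F = l) {ζ : F} (hζ : orderOf ζ = q ^ l - 1)
    {k : ℕ} (hk₀ : k ≠ 0) (hk : k ≤ q ^ (l / 2)) :
    (minpoly B (ζ ^ k)).natDegree = l ∧ Algebra.adjoin B {ζ ^ k} = ⊤ := by
  subst hq hrk
  have card_F : Nat.card F = Nat.card B ^ finrank B F := natCard_eq_pow_finrank
  have sq_le : Nat.card B ^ (finrank B F / 2) * Nat.card B ^ (finrank B F / 2) ≤ Nat.card F := by
    have : Finite B := .of_injective _ (algebraMap B F).injective
    rw [card_F, ← pow_add]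
    exact Nat.pow_le_pow_right Nat.card_pos (by omega)
  have le_orderOf : Nat.card B ^ (finrank B F / 2) ≤ orderOf (ζ ^ k) := by
    refine le_of_mul_self_le_of_sub_one_le_mul Finite.one_lt_card sq_le hk ?_
    rw [card_F, ← hζ]
    exact orderOf_le_orderOf_pow_mul ζ hk₀
  exact natDegree_minpoly_and_algebra_adjoin_of_adjoin_simple_eq_top
    (adjoin_simple_eq_top_of_pow_le_orderOf le_orderOf)

section bigP

variable {p : ℕ → ℕ} {m y : ℕ}

theorem bigP_mul_eq_prod_Icc (hy : 1 ≤ y) : bigP p y * p y = ∏ j ∈ Finset.Icc 1 y, p j := by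
  obtain ⟨n, rfl⟩ := Nat.exists_eq_add_of_le' hy
  exact (Finset.prod_Icc_succ_top hy p).symm

theorem bigP_pos (hp : ∀ i ∈ Finset.Icc 1 m, 0 < p i) (hy : y ∈ Finset.Icc 1 m) : 0 < bigP p y :=
  Finset.prod_pos fun i hi => hp i (by simp only [Finset.mem_Icc] at hi hy ⊢; omega)

theorem two_mul_bigP_le_prod (hp : ∀ i ∈ Finset.Icc 1 m, 2 ≤ p i) (hy : y ∈ Finset.Icc 1 m) :
    2 * bigP p y ≤ ∏ i ∈ Finset.Icc 1 m, p i := by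
  obtain ⟨one_le_y, y_le_m⟩ := Finset.mem_Icc.mp hy
  calc 2 * bigP p y ≤ bigP p y * p y := by rw [mul_comm]; exact Nat.mul_le_mul_left _ (hp y hy)
    _ = ∏ i ∈ Finset.Icc 1 y, p i := bigP_mul_eq_prod_Icc one_le_y
    _ ≤ ∏ i ∈ Finset.Icc 1 m, p i :=
      Finset.prod_le_prod_of_subset_of_one_le' (Finset.Icc_subset_Icc_right y_le_m)
        fun i hi _ => one_le_two.trans (hp i hi)

theorem mul_bigP_lt_pow_half (hp : ∀ i ∈ Finset.Icc 1 m, 2 ≤ p i) (hy : y ∈ Finset.Icc 1 m)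
    {u q l : ℕ} (hu : u < q) (hl : ∏ i ∈ Finset.Icc 1 m, p i ≤ l) :
    u * bigP p y < q ^ (l / 2) := by
  have bigP_le_half : bigP p y ≤ l / 2 := by
    have := two_mul_bigP_le_prod hp hy
    omega
  exact (Nat.mul_le_mul_left u bigP_le_half).trans_lt (mul_lt_pow_of_lt hu _)

end bigP

/-- Let `B = GF(q)`, let `p 1, …, p m` be primes (`m ≥ 2`),
`r = p 1 ⋯ p m`, `n' ≥ 2`, `l = r^{n'}`, `F = GF(q^l)`, and `ζ` a primitive
element of `F`.  If `u > 0` divides `q - 1` and `y ∈ {1, …, m}`, then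
`γ = ζ^{u·∏_{j=1}^{y-1} p_j}` generates `F` over `B`: the minimal polynomial of
`γ` over `B` has degree `l` (equivalently `B(γ) = F`, so `1, γ, …, γ^{l-1}` are
linearly independent over `B`). -/
theorem stmt_11 (q m : ℕ) (hm : 2 ≤ m) (p : ℕ → ℕ)
    (hp : ∀ i ∈ Finset.Icc 1 m, (p i).Prime)
    (r : ℕ) (hr : r = ∏ i ∈ Finset.Icc 1 m, p i)
    (n' : ℕ) (hn' : 2 ≤ n') (l : ℕ) (hl : l = r ^ n')
    (B F : Type*) [Field B] [Field F] [Fintype B] [Fintype F] [Algebra B F]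
    (hq : Fintype.card B = q) (hrk : Module.finrank B F = l)
    (ζ : F) (hζ : orderOf ζ = q ^ l - 1)
    (u : ℕ) (hu : 0 < u) (hdvd : u ∣ q - 1)
    (y : ℕ) (hy : y ∈ Finset.Icc 1 m) :
    (minpoly B (ζ ^ (u * bigP p y))).natDegree = l ∧
      Algebra.adjoin B {ζ ^ (u * bigP p y)} = ⊤ := by
  have bigP_ne_zero : bigP p y ≠ 0 := (bigP_pos (fun i hi => (hp i hi).pos) hy).ne'
  have u_lt_q : u < q :=
    Nat.lt_of_le_pred (hq ▸ Fintype.card_pos)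
      (Nat.le_of_dvd (Nat.sub_pos_of_lt (hq ▸ Fintype.one_lt_card)) hdvd)
  have prod_le_l : ∏ i ∈ Finset.Icc 1 m, p i ≤ l := hr ▸ hl ▸ Nat.le_self_pow (by omega) r
  exact stmt_11_general (Nat.card_eq_fintype_card.trans hq) hrk hζ (mul_ne_zero hu.ne' bigP_ne_zero)
    (mul_bigP_lt_pow_half (fun i hi => (hp i hi).two_le) hy u_lt_q prod_le_l).le
end

section
/- Let u be a positive divisor of q−1, suppose n' ≥ 4, and let w ∈ {1, ..., n'−3} and y ∈ {1, ..., m}. Then the repair bandwidth b = Σ_{(w',z) ∈ ({0,...,n'−1}×{1,...,m}) \ {(w,y)}} rank_B({ζ^{u(t + s·d_{w',z})} : t ∈ T_{w,y}, s ∈ {0, ..., r̄−1}}) of the linear repair scheme of Construction 2 for a node of rack (w,y) satisfies b < ((n̄−1) + 3r̄ + 3m + 1)·l/r̄. -/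
/-- `d_{w,y} = r^w · ∏_{j=1}^{y-1} p_j`. -/
def dwy (p : ℕ → ℕ) (r w y : ℕ) : ℕ := r ^ w * bigP p y

/-- The digit of `t` at position `pos = w·m + y` (`1 ≤ y ≤ m`) in the multi-base
expansion `t = Σ_{w,y} t_{wm+y} · d_{w,y}`, namely `(t / d_{w,y}) % p_y`. -/
def digit (p : ℕ → ℕ) (m r t pos : ℕ) : ℕ :=
  t / dwy p r ((pos - 1) / m) ((pos - 1) % m + 1) % p ((pos - 1) % m + 1)

/-!
The rank of a family of vectors `g e` is at most the number of indices `e`, so it suffices to count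
the exponents `t + s * d` that occur for a helper of weight `d`. Let `D` be the weight of the host
position and `M = r * D` the weight of the position `m` places above. A number `t < l` has `m` zero
digits from the host position on exactly when `t % M < D`; writing `l = M * K`, such `t` are the
numbers `a + M * c` with `a < D` and `c < K`, and there are `D * K = l / r` of them.

* A helper below the host perturbs only `a`: at most `(D + r * d) * K` exponents.
* If `d ∣ M`, say `M = d * e`, the exponent is `a + d * (e * c + s)`: at most `D * (e * K + r)`
  exponents.
* If `M ∣ d`, the exponent is `a + M * (c + s * (d / M))`: at most `D * K + d` exponents.

Every helper thus costs `l / r` (in the second case because `r ≤ K`), plus an excess. The weights at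
least double from one position to the next, so in each of the three ranges the excesses add up to at
most `r * (l / r)`.
-/

open Finset

section MixedRadix

variable {b : ℕ → ℕ}

/-- The weight `b 0 * ⋯ * b (i - 1)` of position `i` in the mixed-radix expansion with bases
`b 0, b 1, …`; the digit of `t` at that position is `t / radixWeight b i % b i`. -/
def radixWeight (b : ℕ → ℕ) (i : ℕ) : ℕ := ∏ j ∈ range i, b j

lemma radixWeight_succ (b : ℕ → ℕ) (i : ℕ) : radixWeight b (i + 1) = radixWeight b i * b i :=
  prod_range_succ _ _

lemma radixWeight_dvd_radixWeight (b : ℕ → ℕ) {i j : ℕ} (h : i ≤ j) :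
    radixWeight b i ∣ radixWeight b j :=
  prod_dvd_prod_of_subset _ _ _ (range_subset_range.2 h)

lemma radixWeight_pos (hb : ∀ i, 2 ≤ b i) (i : ℕ) : 0 < radixWeight b i :=
  prod_pos fun j _ => two_pos.trans_le (hb j)

lemma two_pow_mul_radixWeight_le (hb : ∀ i, 2 ≤ b i) (i k : ℕ) :
    2 ^ k * radixWeight b i ≤ radixWeight b (i + k) := by
  rw [radixWeight, radixWeight, prod_range_add, mul_comm]
  gcongr
  simpa using pow_card_le_prod (range k) (fun j => b (i + j)) 2 fun j _ => hb _

lemma radixWeight_strictMono (hb : ∀ i, 2 ≤ b i) : StrictMono (radixWeight b) :=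
  strictMono_nat_of_lt_succ fun i => by
    rw [radixWeight_succ]
    exact lt_mul_of_one_lt_right (radixWeight_pos hb i) (hb i)

lemma sum_range_radixWeight_lt (hb : ∀ i, 2 ≤ b i) (n : ℕ) :
    ∑ i ∈ range n, radixWeight b i < radixWeight b n := by
  induction n with
  | zero => simp [radixWeight]
  | succ n ih =>
    have hdouble := two_pow_mul_radixWeight_le hb n 1
    rw [sum_range_succ]
    omega

lemma sum_Ico_div_radixWeight_le (hb : ∀ i, 2 ≤ b i) (L i n : ℕ) :
    ∑ k ∈ Ico 1 n, L / radixWeight b (i + k) ≤ L / radixWeight b i :=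
  calc ∑ k ∈ Ico 1 n, L / radixWeight b (i + k)
      ≤ ∑ k ∈ Ico 1 n, L / radixWeight b i / 2 ^ k := by
        refine sum_le_sum fun k _ => ?_
        rw [Nat.div_div_eq_div_mul, mul_comm]
        exact Nat.div_le_div_left (two_pow_mul_radixWeight_le hb i k)
          (Nat.mul_pos (by positivity) (radixWeight_pos hb i))
    _ ≤ L / radixWeight b i := by simpa using Nat.geom_sum_Ico_le le_rfl (L / radixWeight b i) n

lemma mod_radixWeight_add_eq_of_digits_eq_zero {t A m : ℕ}
    (h : ∀ k < m, t / radixWeight b (A + k) % b (A + k) = 0) :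
    t % radixWeight b (A + m) = t % radixWeight b A := by
  induction m with
  | zero => rfl
  | succ m ih =>
    rw [← add_assoc, radixWeight_succ, Nat.mod_mul, h m (by omega), mul_zero, add_zero]
    exact ih fun k hk => h k (by omega)

/-- The numbers below `radixWeight b N` whose digits at the `m` positions from `A` on vanish: the
set `T_{w,y}` of the paper, for the host position `A`. -/
def zeroWindow (b : ℕ → ℕ) (A m N : ℕ) : Finset ℕ :=
  {t ∈ range (radixWeight b N) | ∀ k < m, t / radixWeight b (A + k) % b (A + k) = 0}

lemma mod_lt_of_mem_zeroWindow (hb : ∀ i, 2 ≤ b i) {A m N t : ℕ} (ht : t ∈ zeroWindow b A m N) :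
    t % radixWeight b (A + m) < radixWeight b A := by
  rw [mod_radixWeight_add_eq_of_digits_eq_zero (mem_filter.1 ht).2]
  exact Nat.mod_lt _ (radixWeight_pos hb A)

end MixedRadix

section ExponentCount

/-- The exponents `t + s * d` with `t ∈ T` and `s < r`, which index the field elements whose span
the helper of weight `d` transmits. -/
def repairExponents (T : Finset ℕ) (r d : ℕ) : Finset ℕ :=
  image₂ (fun t s => t + s * d) T (range r)

lemma finrank_span_image_le_card {R V ι : Type*} [Semiring R] [StrongRankCondition R]
    [AddCommMonoid V] [Module R V] (g : ι → V) (S : Finset ι) :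
    Module.finrank R (Submodule.span R (g '' S)) ≤ #S := by
  classical
  rw [← coe_image]
  exact (finrank_span_finset_le_card (R := R) (S.image g)).trans card_image_le

lemma card_le_mul_of_forall_eq_add_mul {S : Finset ℕ} {M X Y : ℕ}
    (h : ∀ e ∈ S, ∃ a < X, ∃ c < Y, e = a + M * c) : #S ≤ X * Y := by
  have hsub : S ⊆ image₂ (fun a c => a + M * c) (range X) (range Y) := fun e he => by
    obtain ⟨a, ha, c, hc, rfl⟩ := h e he
    exact mem_image₂_of_mem (mem_range.2 ha) (mem_range.2 hc)
  simpa using (card_le_card hsub).trans (card_image₂_le _ _ _)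

variable {T : Finset ℕ} {D M K : ℕ}

lemma card_repairExponents_le_add_mul (hT : ∀ t ∈ T, t % M < D ∧ t / M < K) (r d : ℕ) :
    #(repairExponents T r d) ≤ (D + r * d) * K := by
  refine card_le_mul_of_forall_eq_add_mul (M := M) fun e he => ?_
  obtain ⟨t, ht, s, hs, rfl⟩ := mem_image₂.1 he
  have hsd : s * d ≤ r * d := Nat.mul_le_mul_right d (mem_range.1 hs).le
  have htM := Nat.mod_add_div t M
  exact ⟨t % M + s * d, by grind, t / M, (hT t ht).2, by grind⟩

lemma card_repairExponents_le_of_dvd_modulus (hT : ∀ t ∈ T, t % M < D ∧ t / M < K) (r : ℕ) {d : ℕ}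
    (hd : d ∣ M) : #(repairExponents T r d) ≤ D * (M / d * K + r) := by
  refine card_le_mul_of_forall_eq_add_mul (M := d) fun e he => ?_
  obtain ⟨t, ht, s, hs, rfl⟩ := mem_image₂.1 he
  have hc : M / d * (t / M) ≤ M / d * K := Nat.mul_le_mul_left _ (hT t ht).2.le
  refine ⟨t % M, (hT t ht).1, M / d * (t / M) + s, by grind, ?_⟩
  calc t + s * d = t % M + d * (M / d) * (t / M) + s * d := by
        rw [Nat.mul_div_cancel' hd, Nat.mod_add_div]
    _ = _ := by ring

lemma card_repairExponents_le_of_modulus_dvd (hT : ∀ t ∈ T, t % M < D ∧ t / M < K) (r : ℕ) {d : ℕ}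
    (hd : M ∣ d) : #(repairExponents T r d) ≤ D * (K + r * (d / M)) := by
  refine card_le_mul_of_forall_eq_add_mul (M := M) fun e he => ?_
  obtain ⟨t, ht, s, hs, rfl⟩ := mem_image₂.1 he
  have hsd : s * (d / M) ≤ r * (d / M) := Nat.mul_le_mul_right _ (mem_range.1 hs).le
  refine ⟨t % M, (hT t ht).1, t / M + s * (d / M), by have := (hT t ht).2; omega, ?_⟩
  calc t + s * d = t % M + M * (t / M) + s * (M * (d / M)) := by
        rw [Nat.mul_div_cancel' hd, Nat.mod_add_div]
    _ = _ := by ring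

end ExponentCount

section Bandwidth

variable {b : ℕ → ℕ} {T : Finset ℕ} {A m N r K : ℕ}

lemma sum_card_repairExponents_below_le (hb : ∀ i, 2 ≤ b i)
    (hT : ∀ t ∈ T, t % radixWeight b (A + m) < radixWeight b A ∧ t / radixWeight b (A + m) < K)
    (r : ℕ) :
    ∑ i ∈ range A, #(repairExponents T r (radixWeight b i)) ≤
      (A + r) * (radixWeight b A * K) :=
  calc ∑ i ∈ range A, #(repairExponents T r (radixWeight b i))
      ≤ ∑ i ∈ range A, (radixWeight b A + r * radixWeight b i) * K :=
        sum_le_sum fun i _ => card_repairExponents_le_add_mul hT r _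
    _ = (A * radixWeight b A + r * ∑ i ∈ range A, radixWeight b i) * K := by
        simp [← sum_mul, sum_add_distrib, mul_sum]
    _ ≤ (A * radixWeight b A + r * radixWeight b A) * K := by
        gcongr
        exact (sum_range_radixWeight_lt hb A).le
    _ = (A + r) * (radixWeight b A * K) := by ring

lemma sum_card_repairExponents_window_le (hb : ∀ i, 2 ≤ b i)
    (hT : ∀ t ∈ T, t % radixWeight b (A + m) < radixWeight b A ∧ t / radixWeight b (A + m) < K)
    (hr : radixWeight b (A + m) = r * radixWeight b A) (hK : r ≤ K) :
    ∑ k ∈ Ico 1 m, #(repairExponents T r (radixWeight b (A + k))) ≤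
      (m - 1 + r) * (radixWeight b A * K) := by
  set M := radixWeight b (A + m)
  calc ∑ k ∈ Ico 1 m, #(repairExponents T r (radixWeight b (A + k)))
      ≤ ∑ k ∈ Ico 1 m, radixWeight b A * (M / radixWeight b (A + k) * K + r) :=
        sum_le_sum fun k hk => card_repairExponents_le_of_dvd_modulus hT r
          (radixWeight_dvd_radixWeight b (by have := mem_Ico.1 hk; omega))
    _ = radixWeight b A * ((∑ k ∈ Ico 1 m, M / radixWeight b (A + k)) * K + (m - 1) * r) := by
        simp [← mul_sum, sum_add_distrib, sum_mul]
    _ ≤ radixWeight b A * (M / radixWeight b A * K + (m - 1) * K) := by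
        gcongr
        exact sum_Ico_div_radixWeight_le hb M A m
    _ = (m - 1 + r) * (radixWeight b A * K) := by
        rw [hr, Nat.mul_div_cancel _ (radixWeight_pos hb A)]
        ring

lemma sum_card_repairExponents_above_lt (hb : ∀ i, 2 ≤ b i)
    (hT : ∀ t ∈ T, t % radixWeight b (A + m) < radixWeight b A ∧ t / radixWeight b (A + m) < K)
    (hr : radixWeight b (A + m) = r * radixWeight b A)
    (hN : radixWeight b N = radixWeight b (A + m) * K) :
    ∑ i ∈ Ico (A + m) N, #(repairExponents T r (radixWeight b i)) <
      (N - (A + m) + r) * (radixWeight b A * K) := by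
  have hcard : ∀ i ∈ Ico (A + m) N, #(repairExponents T r (radixWeight b i)) ≤
      radixWeight b A * K + radixWeight b i := fun i hi => by
    have hdvd := radixWeight_dvd_radixWeight b (mem_Ico.1 hi).1
    refine (card_repairExponents_le_of_modulus_dvd hT r hdvd).trans_eq ?_
    conv_rhs => rw [← Nat.mul_div_cancel' hdvd, hr]
    rw [hr]
    ring
  calc ∑ i ∈ Ico (A + m) N, #(repairExponents T r (radixWeight b i))
      ≤ (N - (A + m)) * (radixWeight b A * K) + ∑ i ∈ Ico (A + m) N, radixWeight b i := by
        simpa [sum_add_distrib] using sum_le_sum hcard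
    _ ≤ (N - (A + m)) * (radixWeight b A * K) + ∑ i ∈ range N, radixWeight b i := by
        gcongr
        intro i hi
        exact mem_range.2 (mem_Ico.1 hi).2
    _ < (N - (A + m)) * (radixWeight b A * K) + radixWeight b N := by
        gcongr
        exact sum_range_radixWeight_lt hb N
    _ = (N - (A + m) + r) * (radixWeight b A * K) := by
        rw [hN, hr]
        ring

lemma sum_range_erase_eq_sum_add_sum_Ico_add_sum_Ico {α : Type*} [AddCancelCommMonoid α]
    (f : ℕ → α) (hm : 0 < m) (hN : A + m ≤ N) :
    ∑ i ∈ (range N).erase A, f i =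
      ∑ i ∈ range A, f i + ∑ k ∈ Ico 1 m, f (A + k) + ∑ i ∈ Ico (A + m) N, f i := by
  have herase := add_sum_erase (range N) f (a := A) (mem_range.2 (by omega))
  have hwindow := sum_eq_sum_Ico_succ_bot hm fun k => f (A + k)
  rw [← sum_range_add_sum_Ico f hN, sum_range_add, range_eq_Ico (a := m), hwindow] at herase
  simp only [add_zero, zero_add] at herase
  refine add_left_cancel (a := f A) (herase.trans ?_)
  abel

theorem mul_sum_card_repairExponents_lt (hb : ∀ i, 2 ≤ b i) (hm : 0 < m)
    (hr : radixWeight b (A + m) = r * radixWeight b A)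
    (hN : r * radixWeight b (A + m) ≤ radixWeight b N) :
    r * ∑ i ∈ (range N).erase A,
        #(repairExponents (zeroWindow b A m N) r (radixWeight b i)) <
      (N - 1 + 3 * r) * radixWeight b N := by
  have hM : 0 < radixWeight b (A + m) := radixWeight_pos hb _
  have hr0 : 0 < r := Nat.pos_of_mul_pos_right (hr ▸ hM)
  have hAN : A + m ≤ N :=
    (radixWeight_strictMono hb).le_iff_le.1 ((Nat.le_mul_of_pos_left _ hr0).trans hN)
  obtain ⟨K, hK⟩ := radixWeight_dvd_radixWeight b hAN
  have hrK : r ≤ K := Nat.le_of_mul_le_mul_left (by rwa [← hK, mul_comm]) hM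
  have hT : ∀ t ∈ zeroWindow b A m N,
      t % radixWeight b (A + m) < radixWeight b A ∧ t / radixWeight b (A + m) < K := fun t ht =>
    ⟨mod_lt_of_mem_zeroWindow hb ht,
      Nat.div_lt_of_lt_mul (hK ▸ mem_range.1 (mem_filter.1 ht).1)⟩
  calc r * ∑ i ∈ (range N).erase A,
        #(repairExponents (zeroWindow b A m N) r (radixWeight b i))
      < r * ((A + r) * (radixWeight b A * K) + (m - 1 + r) * (radixWeight b A * K) +
          (N - (A + m) + r) * (radixWeight b A * K)) := by
        rw [sum_range_erase_eq_sum_add_sum_Ico_add_sum_Ico _ hm hAN]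
        have hbelow := sum_card_repairExponents_below_le hb hT r
        have hwindow := sum_card_repairExponents_window_le hb hT hr hrK
        have habove := sum_card_repairExponents_above_lt hb hT hr hK
        exact Nat.mul_lt_mul_of_pos_left (by omega) hr0
    _ = (A + (m - 1) + (N - (A + m)) + 3 * r) * (r * radixWeight b A * K) := by ring
    _ = (N - 1 + 3 * r) * radixWeight b N := by
        rw [hK, hr, show A + (m - 1) + (N - (A + m)) = N - 1 by omega]

end Bandwidth

section CyclicBases

/-- The bases `p 1, …, p m, p 1, …, p m, …` of the multi-base expansion, indexed from `0`: the
paper's position `w * m + y` is position `w * m + (y - 1)` here. -/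
def cyclicBase (p : ℕ → ℕ) (m i : ℕ) : ℕ := p (i % m + 1)

variable {p : ℕ → ℕ} {m : ℕ}

lemma two_le_cyclicBase (hp : ∀ i ∈ Icc 1 m, 2 ≤ p i) (hm : 0 < m) (i : ℕ) :
    2 ≤ cyclicBase p m i :=
  hp _ (mem_Icc.2 ⟨Nat.le_add_left _ _, Nat.mod_lt i hm⟩)

lemma radixWeight_cyclicBase_of_le {j : ℕ} (hj : j ≤ m) :
    radixWeight (cyclicBase p m) j = bigP p (j + 1) := by
  rw [bigP, Nat.add_sub_cancel, ← Ico_add_one_right_eq_Icc, prod_Ico_eq_prod_range,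
    Nat.add_sub_cancel, radixWeight]
  refine prod_congr rfl fun i hi => ?_
  rw [cyclicBase, Nat.mod_eq_of_lt ((mem_range.1 hi).trans_le hj), add_comm]

lemma radixWeight_cyclicBase_add_period (p : ℕ → ℕ) (m i : ℕ) :
    radixWeight (cyclicBase p m) (i + m) =
      (∏ i ∈ Icc 1 m, p i) * radixWeight (cyclicBase p m) i := by
  have hperiod : ∏ i ∈ Icc 1 m, p i = radixWeight (cyclicBase p m) m :=
    (radixWeight_cyclicBase_of_le le_rfl).symm
  rw [hperiod, add_comm, radixWeight, prod_range_add, radixWeight, radixWeight]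
  simp only [cyclicBase, Nat.add_mod_left]

lemma radixWeight_cyclicBase_mul_add (p : ℕ → ℕ) (m k i : ℕ) :
    radixWeight (cyclicBase p m) (k * m + i) =
      (∏ i ∈ Icc 1 m, p i) ^ k * radixWeight (cyclicBase p m) i := by
  induction k with
  | zero => simp
  | succ k ih =>
    rw [Nat.succ_mul, add_right_comm, radixWeight_cyclicBase_add_period, ih, pow_succ', mul_assoc]

lemma radixWeight_cyclicBase_mul (p : ℕ → ℕ) (m k : ℕ) :
    radixWeight (cyclicBase p m) (k * m) = (∏ i ∈ Icc 1 m, p i) ^ k := by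
  simpa [radixWeight] using radixWeight_cyclicBase_mul_add p m k 0

lemma dwy_eq_radixWeight (p : ℕ → ℕ) {j : ℕ} (hj : j < m) (k : ℕ) :
    dwy p (∏ i ∈ Icc 1 m, p i) k (j + 1) = radixWeight (cyclicBase p m) (k * m + j) := by
  rw [radixWeight_cyclicBase_mul_add, radixWeight_cyclicBase_of_le hj.le, dwy]

lemma digit_eq_div_radixWeight_mod (p : ℕ → ℕ) (hm : 0 < m) (t i : ℕ) :
    digit p m (∏ i ∈ Icc 1 m, p i) t (i + 1) =
      t / radixWeight (cyclicBase p m) i % cyclicBase p m i := by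
  rw [digit, Nat.add_sub_cancel, dwy_eq_radixWeight p (Nat.mod_lt i hm), Nat.div_add_mod',
    cyclicBase]

lemma sum_range_mul_eq_sum_product {α : Type*} [AddCommMonoid α] (f : ℕ → α) (n m : ℕ) :
    ∑ i ∈ range (n * m), f i = ∑ ij ∈ range n ×ˢ range m, f (ij.1 * m + ij.2) := by
  rw [sum_product]
  induction n with
  | zero => simp
  | succ n ih => rw [Nat.succ_mul, sum_range_add, ih, sum_range_succ]

lemma sum_Icc_one_eq_sum_range {α : Type*} [AddCommMonoid α] (f : ℕ → α) (m : ℕ) :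
    ∑ j ∈ Icc 1 m, f j = ∑ j ∈ range m, f (j + 1) := by
  rw [range_eq_Ico, sum_Ico_add' f 0 m 1, zero_add, Ico_add_one_right_eq_Icc]

lemma sum_racks_eq_sum_positions {α : Type*} [AddCommMonoid α] (p : ℕ → ℕ) (f : ℕ → α) (n m : ℕ) :
    ∑ wz ∈ range n ×ˢ Icc 1 m, f (dwy p (∏ i ∈ Icc 1 m, p i) wz.1 wz.2) =
      ∑ i ∈ range (n * m), f (radixWeight (cyclicBase p m) i) := by
  rw [sum_range_mul_eq_sum_product, sum_product, sum_product]
  refine sum_congr rfl fun k _ => ?_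
  rw [sum_Icc_one_eq_sum_range]
  refine sum_congr rfl fun j hj => ?_
  rw [dwy_eq_radixWeight p (mem_range.1 hj)]

lemma sum_racks_erase_eq_sum_positions_erase {α : Type*} [AddCancelCommMonoid α] (p : ℕ → ℕ)
    (f : ℕ → α) {n w y : ℕ} (hw : w < n) (hy : y ∈ Icc 1 m) :
    ∑ wz ∈ (range n ×ˢ Icc 1 m).erase (w, y), f (dwy p (∏ i ∈ Icc 1 m, p i) wz.1 wz.2) =
      ∑ i ∈ (range (n * m)).erase (w * m + (y - 1)), f (radixWeight (cyclicBase p m) i) := by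
  obtain ⟨hy1, hym⟩ := mem_Icc.1 hy
  have hposition : w * m + (y - 1) < n * m := by
    have := Nat.mul_le_mul_right m (Nat.succ_le_of_lt hw)
    grind
  have hhost : dwy p (∏ i ∈ Icc 1 m, p i) w y =
      radixWeight (cyclicBase p m) (w * m + (y - 1)) := by
    rw [← dwy_eq_radixWeight p (by omega), Nat.sub_add_cancel hy1]
  have hracks := add_sum_erase (range n ×ˢ Icc 1 m)
    (fun wz => f (dwy p (∏ i ∈ Icc 1 m, p i) wz.1 wz.2)) (a := (w, y))
    (mem_product.2 ⟨mem_range.2 hw, hy⟩)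
  have hpositions := add_sum_erase (range (n * m))
    (fun i => f (radixWeight (cyclicBase p m) i)) (mem_range.2 hposition)
  rw [sum_racks_eq_sum_positions, ← hpositions, hhost] at hracks
  exact add_left_cancel hracks

lemma image_repairExponents_zeroWindow {V : Type*} (p : ℕ → ℕ) {n w y : ℕ} (hy : y ∈ Icc 1 m)
    (r d : ℕ) (g : ℕ → V) :
    {x | ∃ t, (t < (∏ i ∈ Icc 1 m, p i) ^ n ∧
        ∀ k < m, digit p m (∏ i ∈ Icc 1 m, p i) t (w * m + y + k) = 0) ∧
      ∃ s < r, x = g (t + s * d)} =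
    g '' repairExponents (zeroWindow (cyclicBase p m) (w * m + (y - 1)) m (n * m)) r d := by
  obtain ⟨hy1, hym⟩ := mem_Icc.1 hy
  have hdigit : ∀ t k, digit p m (∏ i ∈ Icc 1 m, p i) t (w * m + y + k) =
      t / radixWeight (cyclicBase p m) (w * m + (y - 1) + k) %
        cyclicBase p m (w * m + (y - 1) + k) := fun t k => by
    rw [← digit_eq_div_radixWeight_mod p (by omega)]
    congr 1
    omega
  ext x
  simp only [repairExponents, zeroWindow, hdigit, radixWeight_cyclicBase_mul, Set.mem_ofPred_eq,
    Set.mem_image, coe_image₂, Set.mem_image2, coe_filter, coe_range, Set.mem_Iio, mem_range]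
  grind

lemma sum_finrank_le_sum_card_repairExponents {r : ℕ} (hr : r = ∏ i ∈ Icc 1 m, p i) {n l : ℕ}
    (hl : l = r ^ n) {B V : Type*} [Semiring B] [StrongRankCondition B] [AddCommMonoid V]
    [Module B V] (g : ℕ → V) {w y : ℕ} (hw : w < n) (hy : y ∈ Icc 1 m) :
    ∑ wz ∈ (range n ×ˢ Icc 1 m).erase (w, y),
        Module.finrank B ↥(Submodule.span B
          {x : V | ∃ t, (t < l ∧ ∀ k < m, digit p m r t (w * m + y + k) = 0) ∧
            ∃ s < r, x = g (t + s * dwy p r wz.1 wz.2)}) ≤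
      ∑ i ∈ (range (n * m)).erase (w * m + (y - 1)),
        #(repairExponents (zeroWindow (cyclicBase p m) (w * m + (y - 1)) m (n * m)) r
          (radixWeight (cyclicBase p m) i)) := by
  subst hl hr
  rw [← sum_racks_erase_eq_sum_positions_erase p (fun d => #(repairExponents _ _ d)) hw hy]
  refine sum_le_sum fun wz _ => ?_
  rw [image_repairExponents_zeroWindow p hy]
  exact finrank_span_image_le_card g _

end CyclicBases

/-- The hypothesis `hw` leaves room above the host position for two windows of `m` positions. This
gives `r ≤ K` in the count of the helpers inside the window. -/
theorem stmt_13_general {m : ℕ} {p : ℕ → ℕ} (hp : ∀ i ∈ Icc 1 m, 2 ≤ p i) {r : ℕ}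
    (hr : r = ∏ i ∈ Icc 1 m, p i) {n' l : ℕ} (hl : l = r ^ n')
    {B V : Type*} [Semiring B] [StrongRankCondition B] [AddCommMonoid V] [Module B V]
    (g : ℕ → V) {w y : ℕ} (hy : y ∈ Icc 1 m) (hw : w * m + y + 2 * m ≤ n' * m + 1) :
    ((∑ wz ∈ (range n' ×ˢ Icc 1 m).erase (w, y),
        Module.finrank B ↥(Submodule.span B
          {x : V | ∃ t, (t < l ∧ ∀ k < m, digit p m r t (w * m + y + k) = 0) ∧
            ∃ s < r, x = g (t + s * dwy p r wz.1 wz.2)}) : ℕ) : ℝ)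
      < (((n' * m : ℕ) : ℝ) - 1 + 3 * r) * l / r := by
  obtain ⟨hy1, hym⟩ := mem_Icc.1 hy
  have hm : 0 < m := hy1.trans hym
  have hb := two_le_cyclicBase hp hm
  have hwn : w < n' := by
    by_contra! h
    have := Nat.mul_le_mul_right m h
    omega
  have hperiod : radixWeight (cyclicBase p m) (w * m + (y - 1) + m) =
      r * radixWeight (cyclicBase p m) (w * m + (y - 1)) :=
    hr ▸ radixWeight_cyclicBase_add_period p m _
  have hroom : r * radixWeight (cyclicBase p m) (w * m + (y - 1) + m) ≤
      radixWeight (cyclicBase p m) (n' * m) := by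
    rw [hr, ← radixWeight_cyclicBase_add_period]
    exact (radixWeight_strictMono hb).monotone (by omega)
  have hl' : radixWeight (cyclicBase p m) (n' * m) = l := by
    rw [hl, hr, radixWeight_cyclicBase_mul]
  have hcount := mul_sum_card_repairExponents_lt hb hm hperiod hroom
  rw [hl'] at hcount
  have hr0 : 0 < r := hr ▸ prod_pos fun i hi => two_pos.trans_le (hp i hi)
  have hN : ((n' * m - 1 : ℕ) : ℝ) = ((n' * m : ℕ) : ℝ) - 1 :=
    Nat.cast_pred (Nat.mul_pos (by omega) hm)
  have hlt := (Nat.mul_le_mul_left r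
    (sum_finrank_le_sum_card_repairExponents (B := B) hr hl g hwn hy)).trans_lt hcount
  rw [lt_div_iff₀' (by exact_mod_cast hr0), ← hN]
  exact_mod_cast hlt

/-- **Theorem 6(i).** Construction-2 setting: `B = GF(q)`,
primes `p 1, …, p m` (`m ≥ 2`), `r = p 1 ⋯ p m`, `n' ≥ 4`, `n̄ = n'm`,
`l = r^{n'}`, `F = GF(q^l)`, `ζ` primitive in `F`, `u > 0` a divisor of `q-1`.
For a host rack `(w, y)` with `w ∈ {1, …, n'-3}`, `y ∈ {1, …, m}`, and
`T_{w,y} = {t < l : digits of t at positions wm+y, …, wm+y+m-1 are 0}`, the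
repair bandwidth
`b = Σ_{(w',z) ≠ (w,y)} rank_B({ζ^{u(t+s·d_{w',z})} : t ∈ T_{w,y}, s < r})`
satisfies `b < ((n̄-1) + 3r + 3m + 1)·l/r`. -/
theorem stmt_13 (q m : ℕ) (hm : 2 ≤ m) (p : ℕ → ℕ)
    (hp : ∀ i ∈ Finset.Icc 1 m, (p i).Prime)
    (r : ℕ) (hr : r = ∏ i ∈ Finset.Icc 1 m, p i)
    (n' : ℕ) (hn' : 4 ≤ n') (l : ℕ) (hl : l = r ^ n')
    (B F : Type*) [Field B] [Field F] [Fintype B] [Fintype F] [Algebra B F]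
    (hq : Fintype.card B = q) (hrk : Module.finrank B F = l)
    (ζ : F) (hζ : orderOf ζ = q ^ l - 1)
    (u : ℕ) (hu : 0 < u) (hdvd : u ∣ q - 1)
    (w y : ℕ) (hw : w ∈ Finset.Icc 1 (n' - 3)) (hy : y ∈ Finset.Icc 1 m) :
    ((∑ wz ∈ (Finset.range n' ×ˢ Finset.Icc 1 m).erase (w, y),
        Module.finrank B ↥(Submodule.span B
          {x : F | ∃ t, (t < l ∧ ∀ k < m, digit p m r t (w * m + y + k) = 0) ∧
            ∃ s < r, x = ζ ^ (u * (t + s * dwy p r wz.1 wz.2))}) : ℕ) : ℝ)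
      < (((n' * m : ℕ) : ℝ) - 1 + 3 * r + 3 * m + 1) * l / r := by
  have hroom : w * m + y + 2 * m ≤ n' * m + 1 := by
    nlinarith [mem_Icc.1 hw, mem_Icc.1 hy, Nat.mul_le_mul_right m (show w + 3 ≤ n' by grind)]
  refine (stmt_13_general (fun i hi => (hp i hi).two_le) hr hl (fun e => ζ ^ (u * e)) hy
    hroom).trans_le ?_
  gcongr ?_ * _ / _
  linarith [m.cast_nonneg (α := ℝ)]
end

section
/- Let u be a positive divisor of q−1 and y ∈ {1, ..., m}. Then the repair bandwidth b = Σ_{(w',z) ∈ ({0,...,n'−1}×{1,...,m}) \ {(n'−1,y)}} rank_B({ζ^{u(t + s·d_{w',z})} : t ∈ T_{n'−1,y}, s ∈ {0, ..., r̄−1}}) of the linear repair scheme of Construction 2 for a node of rack (n'−1, y) satisfies b < ((n̄−1) + (m+1)r̄ + 2)·l/r̄. -/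
/-- `T_{n'-1,y}`: the `t ∈ {0,…,l-1}` whose digits at positions
`(n'-1)m+y, …, n'm` and at positions `1, …, y-1` all vanish. -/
def Ttop (p : ℕ → ℕ) (m r n' l y : ℕ) : Set ℕ :=
  {t : ℕ | t < l ∧
    (∀ pos, (n' - 1) * m + y ≤ pos → pos ≤ n' * m → digit p m r t pos = 0) ∧
    (∀ pos, 1 ≤ pos → pos ≤ y - 1 → digit p m r t pos = 0)}

/-!
Ordered lexicographically and counted from place `0`, the racks carry the place values `d_i` of a
mixed-radix numeral system, and the host rack stands at place `a + (n'-1)m` with `a = y - 1`. The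
vanishing digits make every element of `T` a multiple `d_a j` with `j < L = r^{n'-1}`. For one of
the `(n'-1)m` places `a + i` with `i < (n'-1)m`, the value `d_{a+i}` is a multiple `d_a e_i`, so all
exponents `t + s d_{a+i}` have the form `d_a (j + s e_i)` with `j + s e_i < L + (r-1) e_i`, which
bounds the rank. Since `Σ_i e_i < L`, these racks cost at most `((n'-1)m + r - 1) L` in total. Each
of the remaining `m - 1` racks costs at most `l = r L`.
-/

section MixedRadix

variable {b : ℕ → ℕ} {a k n t : ℕ}

/-- The weight of digit `i` in the mixed-radix numeral system with base sequence `b`, the lowest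
digit being digit `0`; digit `i` of `t` is then `t / placeValue b i % b i`. -/
def placeValue (b : ℕ → ℕ) (i : ℕ) : ℕ := ∏ j ∈ Finset.range i, b j

theorem placeValue_zero (b : ℕ → ℕ) : placeValue b 0 = 1 := Finset.prod_range_zero b

theorem placeValue_succ (b : ℕ → ℕ) (i : ℕ) : placeValue b (i + 1) = placeValue b i * b i :=
  Finset.prod_range_succ b i

theorem placeValue_add (b : ℕ → ℕ) (i j : ℕ) :
    placeValue b (i + j) = placeValue b i * placeValue (fun x => b (i + x)) j :=
  Finset.prod_range_add b i j

theorem placeValue_dvd_of_digits_eq_zero (h : ∀ i < a, t / placeValue b i % b i = 0) :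
    placeValue b a ∣ t := by
  induction a with
  | zero => exact placeValue_zero b ▸ one_dvd t
  | succ a ih =>
    rw [placeValue_succ]
    exact Nat.mul_dvd_of_dvd_div (ih fun i hi => h i (by omega))
      (Nat.dvd_of_mod_eq_zero (h a a.lt_succ_self))

theorem lt_placeValue_of_digits_eq_zero (hkn : k ≤ n) (ht : t < placeValue b n)
    (h : ∀ i, k ≤ i → i < n → t / placeValue b i % b i = 0) : t < placeValue b k := by
  induction n, hkn using Nat.le_induction with
  | base => exact ht
  | succ n hkn ih =>
    refine ih ?_ fun i hki hin => h i hki (by omega)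
    rw [placeValue_succ] at ht
    have hquot : t / placeValue b n = 0 :=
      Nat.mod_eq_of_lt (Nat.div_lt_of_lt_mul ht) ▸ h n hkn n.lt_succ_self
    refine (Nat.div_eq_zero_iff.1 hquot).resolve_left fun hzero => ?_
    simp [hzero] at ht

theorem exists_eq_placeValue_mul_of_digits_eq_zero (hkn : a + k ≤ n) (ht : t < placeValue b n)
    (hlow : ∀ i < a, t / placeValue b i % b i = 0)
    (hhigh : ∀ i, a + k ≤ i → i < n → t / placeValue b i % b i = 0) :
    ∃ j < placeValue (fun x => b (a + x)) k, t = placeValue b a * j := by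
  obtain ⟨j, rfl⟩ := placeValue_dvd_of_digits_eq_zero hlow
  have hlt := lt_placeValue_of_digits_eq_zero hkn ht hhigh
  rw [placeValue_add] at hlt
  exact ⟨j, Nat.lt_of_mul_lt_mul_left hlt, rfl⟩

theorem sum_placeValue_lt (hb : ∀ i < n, 2 ≤ b i) :
    ∑ i ∈ Finset.range n, placeValue b i < placeValue b n := by
  induction n with
  | zero => simp [placeValue_zero]
  | succ n ih =>
    have hsum := ih fun i hi => hb i (by omega)
    have hdouble := Nat.mul_le_mul_left (placeValue b n) (hb n n.lt_succ_self)
    rw [Finset.sum_range_succ, placeValue_succ]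
    omega

theorem placeValue_mul_add_of_periodic (hb : Function.Periodic b n) (k i : ℕ) :
    placeValue b (k * n + i) = placeValue b (k * n) * placeValue b i := by
  have hshift : (fun x => b (k * n + x)) = b := funext fun x => by
    rw [add_comm]; exact hb.nat_mul k x
  rw [placeValue_add, hshift]

theorem placeValue_mul_of_periodic (hb : Function.Periodic b n) (k : ℕ) :
    placeValue b (k * n) = placeValue b n ^ k := by
  induction k with
  | zero => rw [zero_mul, placeValue_zero, pow_zero]
  | succ k ih => rw [Nat.succ_mul, placeValue_mul_add_of_periodic hb, ih, pow_succ]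

theorem placeValue_shift_mul_of_periodic (hb : Function.Periodic b n) (ha : placeValue b a ≠ 0)
    (k : ℕ) : placeValue (fun x => b (a + x)) (k * n) = placeValue b n ^ k := by
  apply Nat.eq_of_mul_eq_mul_left (Nat.pos_of_ne_zero ha)
  rw [← placeValue_add, add_comm, placeValue_mul_add_of_periodic hb, mul_comm,
    placeValue_mul_of_periodic hb]

end MixedRadix

section DownloadSpan

variable {R V : Type*} [Semiring R] [StrongRankCondition R] [AddCommMonoid V] [Module R V]
variable {v : ℕ → V} {T : Set ℕ} {b : ℕ → ℕ} {D L a k n r : ℕ}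

/-- The span of the vectors `v (t + s * d)` with `t ∈ T` and `s < r`. For `v i = ζ ^ (u * i)` and
`d = d_{w,z}`, its rank is the number of symbols downloaded from the helper rack `(w, z)`. -/
def downloadSpan (R : Type*) {V : Type*} [Semiring R] [AddCommMonoid V] [Module R V]
    (v : ℕ → V) (T : Set ℕ) (r d : ℕ) : Submodule R V :=
  Submodule.span R {x | ∃ t ∈ T, ∃ s < r, x = v (t + s * d)}

theorem finrank_downloadSpan_mul_le (hT : ∀ t ∈ T, ∃ j < L, t = D * j) (e : ℕ) :
    Module.finrank R (downloadSpan R v T r (D * e)) ≤ L + (r - 1) * e := by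
  classical
  set S : Finset V := (Finset.range (L + (r - 1) * e)).image fun i => v (D * i)
  have hsub : {x | ∃ t ∈ T, ∃ s < r, x = v (t + s * (D * e))} ⊆ (S : Set V) := by
    rintro _ ⟨t, ht, s, hs, rfl⟩
    obtain ⟨j, hj, rfl⟩ := hT t ht
    have hse : s * e ≤ (r - 1) * e := Nat.mul_le_mul_right e (by omega)
    exact Finset.mem_image.2 ⟨j + s * e, Finset.mem_range.2 (by omega), by ring_nf⟩
  calc Module.finrank R (downloadSpan R v T r (D * e))
      ≤ Module.finrank R (Submodule.span R (S : Set V)) :=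
        Submodule.finrank_mono (Submodule.span_mono hsub)
    _ ≤ S.card := finrank_span_finset_le_card S
    _ ≤ L + (r - 1) * e := Finset.card_image_le.trans_eq (Finset.card_range _)

theorem sum_finrank_downloadSpan_placeValue_le (hb : ∀ i < k, 2 ≤ b (a + i))
    (hT : ∀ t ∈ T, ∃ j < placeValue (fun x => b (a + x)) k, t = placeValue b a * j) :
    ∑ i ∈ Finset.range k, Module.finrank R (downloadSpan R v T r (placeValue b (a + i)))
      ≤ (k + (r - 1)) * placeValue (fun x => b (a + x)) k := by
  set W := placeValue fun x => b (a + x)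
  calc ∑ i ∈ Finset.range k, Module.finrank R (downloadSpan R v T r (placeValue b (a + i)))
      ≤ ∑ i ∈ Finset.range k, (W k + (r - 1) * W i) := Finset.sum_le_sum fun i _ => by
        rw [placeValue_add]
        exact finrank_downloadSpan_mul_le hT (W i)
    _ = k * W k + (r - 1) * ∑ i ∈ Finset.range k, W i := by
        rw [Finset.sum_add_distrib, Finset.sum_const, Finset.card_range, smul_eq_mul,
          Finset.mul_sum]
    _ ≤ k * W k + (r - 1) * W k := by gcongr; exact (sum_placeValue_lt hb).le
    _ = (k + (r - 1)) * W k := (add_mul ..).symm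

theorem sum_erase_finrank_downloadSpan_placeValue_le [Module.Finite R V] (hkn : a + k < n)
    (hb : ∀ i < k, 2 ≤ b (a + i))
    (hT : ∀ t ∈ T, ∃ j < placeValue (fun x => b (a + x)) k, t = placeValue b a * j) :
    ∑ i ∈ (Finset.range n).erase (a + k),
        Module.finrank R (downloadSpan R v T r (placeValue b i))
      ≤ (n - 1 - k) * Module.finrank R V
        + (k + (r - 1)) * placeValue (fun x => b (a + x)) k := by
  have hsub : Finset.Ico a (a + k) ⊆ (Finset.range n).erase (a + k) := fun i hi => by
    simp only [Finset.mem_Ico, Finset.mem_erase, Finset.mem_range] at *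
    omega
  have hcard : ((Finset.range n).erase (a + k) \ Finset.Ico a (a + k)).card = n - 1 - k := by
    rw [Finset.card_sdiff_of_subset hsub, Finset.card_erase_of_mem (Finset.mem_range.2 hkn),
      Finset.card_range, Nat.card_Ico, Nat.add_sub_cancel_left]
  rw [← Finset.sum_sdiff hsub, Finset.sum_Ico_eq_sum_range, Nat.add_sub_cancel_left, ← hcard]
  exact add_le_add (Finset.sum_le_card_nsmul _ _ _ fun i _ => Submodule.finrank_le _)
    (sum_finrank_downloadSpan_placeValue_le hb hT)

end DownloadSpan

section Racks

variable {p : ℕ → ℕ} {m r N y : ℕ}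

/-- The rack `(w, z)` at place `i = w * m + (z - 1)`. Places are counted from `0`, so place `i` is
position `i + 1` in `digit`. -/
def rackAt (m i : ℕ) : ℕ × ℕ := (i / m, i % m + 1)

theorem rackAt_injective (m : ℕ) : Function.Injective (rackAt m) := fun i j hij => by
  rw [rackAt, rackAt, Prod.mk.injEq, Nat.add_right_cancel_iff] at hij
  rw [← Nat.mod_add_div' i m, hij.1, hij.2, Nat.mod_add_div']

theorem rackAt_sub_one_add_mul {z : ℕ} (hz : z ∈ Finset.Icc 1 m) (w : ℕ) :
    rackAt m (z - 1 + w * m) = (w, z) := by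
  obtain ⟨hz1, hzm⟩ := Finset.mem_Icc.1 hz
  have hlt : z - 1 < m := by omega
  rw [rackAt, Nat.add_mul_mod_self_right, Nat.mod_eq_of_lt hlt, Nat.sub_add_cancel hz1,
    Nat.add_mul_div_right _ _ (by omega), Nat.div_eq_of_lt hlt, zero_add]

theorem image_rackAt_range (m n : ℕ) :
    (Finset.range (n * m)).image (rackAt m) = Finset.range n ×ˢ Finset.Icc 1 m := by
  ext ⟨w, z⟩
  simp only [Finset.mem_image, Finset.mem_product, Finset.mem_range]
  constructor
  · rintro ⟨i, hi, hiwz⟩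
    obtain ⟨rfl, rfl⟩ := Prod.mk.inj hiwz
    have hm : 0 < m := Nat.pos_of_lt_mul_left hi
    exact ⟨(Nat.div_lt_iff_lt_mul hm).2 hi, Finset.mem_Icc.2 ⟨Nat.succ_pos _, Nat.mod_lt i hm⟩⟩
  · rintro ⟨hw, hz⟩
    refine ⟨z - 1 + w * m, ?_, rackAt_sub_one_add_mul hz w⟩
    have hblock : (w + 1) * m ≤ n * m := Nat.mul_le_mul_right m hw
    rw [Nat.succ_mul] at hblock
    rw [Finset.mem_Icc] at hz
    omega

theorem sum_erase_racks_eq_sum_erase_range {M : Type*} [AddCommMonoid M] (hy : y ∈ Finset.Icc 1 m)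
    (n w : ℕ) (f : ℕ × ℕ → M) :
    ∑ wz ∈ (Finset.range n ×ˢ Finset.Icc 1 m).erase (w, y), f wz
      = ∑ i ∈ (Finset.range (n * m)).erase (y - 1 + w * m), f (rackAt m i) := by
  rw [← image_rackAt_range, ← rackAt_sub_one_add_mul hy,
    ← Finset.image_erase (rackAt_injective m), Finset.sum_image (rackAt_injective m).injOn]

/-- The base sequence of the multi-base expansion, periodically repeating `p 1, …, p m`. -/
def rackBase (p : ℕ → ℕ) (m i : ℕ) : ℕ := p (rackAt m i).2

theorem rackBase_periodic (p : ℕ → ℕ) (m : ℕ) : Function.Periodic (rackBase p m) m := fun i => by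
  simp only [rackBase, rackAt, Nat.add_mod_right]

theorem placeValue_rackBase_of_le {i : ℕ} (hi : i ≤ m) :
    placeValue (rackBase p m) i = bigP p (i + 1) := by
  rw [bigP, ← Finset.Ico_add_one_right_eq_Icc, Finset.prod_Ico_eq_prod_range]
  refine Finset.prod_congr rfl fun j hj => ?_
  rw [rackBase, rackAt, Nat.mod_eq_of_lt ((Finset.mem_range.1 hj).trans_le hi), add_comm]

theorem placeValue_rackBase_self (p : ℕ → ℕ) (m : ℕ) :
    placeValue (rackBase p m) m = ∏ i ∈ Finset.Icc 1 m, p i :=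
  placeValue_rackBase_of_le le_rfl

theorem placeValue_rackBase_mul (hr : r = ∏ i ∈ Finset.Icc 1 m, p i) (w : ℕ) :
    placeValue (rackBase p m) (w * m) = r ^ w := by
  rw [placeValue_mul_of_periodic (rackBase_periodic p m), placeValue_rackBase_self, hr]

theorem placeValue_rackBase (hm : 0 < m) (hr : r = ∏ i ∈ Finset.Icc 1 m, p i) (i : ℕ) :
    placeValue (rackBase p m) i = dwy p r (rackAt m i).1 (rackAt m i).2 := by
  conv_lhs => rw [← Nat.div_add_mod' i m]
  rw [placeValue_mul_add_of_periodic (rackBase_periodic p m), placeValue_rackBase_mul hr,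
    placeValue_rackBase_of_le (Nat.mod_lt i hm).le, rackAt, dwy]

theorem digit_succ_eq (hm : 0 < m) (hr : r = ∏ i ∈ Finset.Icc 1 m, p i) (t i : ℕ) :
    digit p m r t (i + 1) = t / placeValue (rackBase p m) i % rackBase p m i := by
  rw [placeValue_rackBase hm hr, rackBase, rackAt, digit, Nat.add_sub_cancel]

theorem exists_eq_placeValue_mul_of_mem_Ttop {t : ℕ} (hr : r = ∏ i ∈ Finset.Icc 1 m, p i)
    (hy : y ∈ Finset.Icc 1 m) (ht : t ∈ Ttop p m r (N + 1) (r ^ (N + 1)) y) :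
    ∃ j < placeValue (fun x => rackBase p m (y - 1 + x)) (N * m),
      t = placeValue (rackBase p m) (y - 1) * j := by
  obtain ⟨hlt, hhigh, hlow⟩ := ht
  obtain ⟨hy1, hym⟩ := Finset.mem_Icc.1 hy
  have hm : 0 < m := by omega
  have hsucc : (N + 1) * m = N * m + m := Nat.succ_mul N m
  rw [← placeValue_rackBase_mul hr] at hlt
  refine exists_eq_placeValue_mul_of_digits_eq_zero (by omega) hlt (fun i hi => ?_)
    fun i hki hin => ?_
  · rw [← digit_succ_eq hm hr]
    exact hlow (i + 1) (by omega) (by omega)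
  · rw [← digit_succ_eq hm hr]
    exact hhigh (i + 1) (by rw [Nat.add_sub_cancel]; omega) hin

theorem sum_erase_finrank_downloadSpan_dwy_le {R V : Type*} [Semiring R] [StrongRankCondition R]
    [AddCommMonoid V] [Module R V] [Module.Finite R V] (hp : ∀ i ∈ Finset.Icc 1 m, 2 ≤ p i)
    (hr : r = ∏ i ∈ Finset.Icc 1 m, p i) (hV : Module.finrank R V ≤ r ^ (N + 1)) (v : ℕ → V)
    (hy : y ∈ Finset.Icc 1 m) :
    ∑ wz ∈ (Finset.range (N + 1) ×ˢ Finset.Icc 1 m).erase (N, y), Module.finrank R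
        (downloadSpan R v (Ttop p m r (N + 1) (r ^ (N + 1)) y) r (dwy p r wz.1 wz.2))
      ≤ (m - 1) * r ^ (N + 1) + (N * m + (r - 1)) * r ^ N := by
  obtain ⟨hy1, hym⟩ := Finset.mem_Icc.1 hy
  have hm : 0 < m := by omega
  have hsucc : (N + 1) * m = N * m + m := Nat.succ_mul N m
  have hbase (i : ℕ) : 2 ≤ rackBase p m i :=
    hp _ (Finset.mem_Icc.2 ⟨Nat.succ_pos _, Nat.mod_lt i hm⟩)
  have hplace : placeValue (rackBase p m) (y - 1) ≠ 0 :=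
    Finset.prod_ne_zero_iff.2 fun i _ => (zero_lt_two.trans_le (hbase i)).ne'
  have hshift : placeValue (fun x => rackBase p m (y - 1 + x)) (N * m) = r ^ N := by
    rw [placeValue_shift_mul_of_periodic (rackBase_periodic p m) hplace,
      placeValue_rackBase_self, hr]
  set T := Ttop p m r (N + 1) (r ^ (N + 1)) y
  let rank (d : ℕ) : ℕ := Module.finrank R (downloadSpan R v T r d)
  calc ∑ wz ∈ (Finset.range (N + 1) ×ˢ Finset.Icc 1 m).erase (N, y), rank (dwy p r wz.1 wz.2)
      = ∑ i ∈ (Finset.range ((N + 1) * m)).erase (y - 1 + N * m),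
          rank (placeValue (rackBase p m) i) := by
        simp only [sum_erase_racks_eq_sum_erase_range hy, placeValue_rackBase hm hr]
    _ ≤ ((N + 1) * m - 1 - N * m) * Module.finrank R V + (N * m + (r - 1)) * r ^ N :=
        hshift ▸ sum_erase_finrank_downloadSpan_placeValue_le (by omega) (fun i _ => hbase _)
          fun t ht => exists_eq_placeValue_mul_of_mem_Ttop hr hy ht
    _ ≤ (m - 1) * r ^ (N + 1) + (N * m + (r - 1)) * r ^ N :=
        Nat.add_le_add_right (Nat.mul_le_mul (by omega) hV) _

end Racks

theorem stmt_15_general {m r n' l y : ℕ} {p : ℕ → ℕ} (hp : ∀ i ∈ Finset.Icc 1 m, 2 ≤ p i)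
    (hr : r = ∏ i ∈ Finset.Icc 1 m, p i) (hn' : 1 ≤ n') (hl : l = r ^ n')
    {R V : Type*} [Semiring R] [StrongRankCondition R] [AddCommMonoid V] [Module R V]
    [Module.Finite R V] (hV : Module.finrank R V ≤ l) (v : ℕ → V) (hy : y ∈ Finset.Icc 1 m) :
    ((∑ wz ∈ (Finset.range n' ×ˢ Finset.Icc 1 m).erase (n' - 1, y),
        Module.finrank R (downloadSpan R v (Ttop p m r n' l y) r (dwy p r wz.1 wz.2)) : ℕ) : ℝ)
      < (((n' * m : ℕ) : ℝ) - 1 + (m + 1) * r + 2) * l / r := by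
  subst hl
  obtain ⟨N, rfl⟩ : ∃ N, n' = N + 1 := ⟨n' - 1, by omega⟩
  have hm : 1 ≤ m := (Finset.mem_Icc.1 hy).1.trans (Finset.mem_Icc.1 hy).2
  have hr1 : 1 ≤ r := hr ▸ Finset.prod_pos fun i hi => zero_lt_two.trans_le (hp i hi)
  have hr0 : (0 : ℝ) < r := by exact_mod_cast hr1
  calc _ ≤ (((m - 1) * r ^ (N + 1) + (N * m + (r - 1)) * r ^ N : ℕ) : ℝ) :=
        Nat.cast_le.2 (sum_erase_finrank_downloadSpan_dwy_le hp hr hV v hy)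
    _ = ((m - 1) * r + N * m + (r - 1)) * (r : ℝ) ^ N := by
        push_cast [Nat.cast_sub hm, Nat.cast_sub hr1]
        ring
    _ < (((N + 1) * m : ℕ) - 1 + (m + 1) * r + 2) * (r : ℝ) ^ N := by
        refine mul_lt_mul_of_pos_right ?_ (by positivity)
        push_cast
        linarith
    _ = (((N + 1) * m : ℕ) - 1 + (m + 1) * r + 2) * ((r ^ (N + 1) : ℕ) : ℝ) / r := by
        rw [Nat.cast_pow, pow_succ, ← mul_assoc, mul_div_cancel_right₀ _ hr0.ne']

/-- **Theorem 6(iii).** Construction-2 setting: `B = GF(q)`,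
primes `p 1, …, p m` (`m ≥ 2`), `r = p 1 ⋯ p m`, `n' ≥ 2`, `n̄ = n'm`,
`l = r^{n'}`, `F = GF(q^l)`, `ζ` primitive in `F`, `u > 0` a divisor of `q-1`.
For the host rack `(n'-1, y)` with `y ∈ {1, …, m}`, the repair bandwidth
`b = Σ_{(w',z) ≠ (n'-1,y)} rank_B({ζ^{u(t+s·d_{w',z})} : t ∈ T_{n'-1,y}, s < r})`
satisfies `b < ((n̄-1) + (m+1)r + 2)·l/r`. -/
theorem stmt_15 (q m : ℕ) (hm : 2 ≤ m) (p : ℕ → ℕ)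
    (hp : ∀ i ∈ Finset.Icc 1 m, (p i).Prime)
    (r : ℕ) (hr : r = ∏ i ∈ Finset.Icc 1 m, p i)
    (n' : ℕ) (hn' : 2 ≤ n') (l : ℕ) (hl : l = r ^ n')
    (B F : Type*) [Field B] [Field F] [Fintype B] [Fintype F] [Algebra B F]
    (hq : Fintype.card B = q) (hrk : Module.finrank B F = l)
    (ζ : F) (hζ : orderOf ζ = q ^ l - 1)
    (u : ℕ) (hu : 0 < u) (hdvd : u ∣ q - 1)
    (y : ℕ) (hy : y ∈ Finset.Icc 1 m) :
    ((∑ wz ∈ (Finset.range n' ×ˢ Finset.Icc 1 m).erase (n' - 1, y),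
        Module.finrank B ↥(Submodule.span B
          {x : F | ∃ t ∈ Ttop p m r n' l y,
            ∃ s < r, x = ζ ^ (u * (t + s * dwy p r wz.1 wz.2))}) : ℕ) : ℝ)
      < (((n' * m : ℕ) : ℝ) - 1 + (m + 1) * r + 2) * l / r :=
  stmt_15_general (fun i hi => (hp i hi).two_le) hr (by omega) hl hrk.le (fun i => ζ ^ (u * i)) hy
end

section
/- Let u be a positive integer with u dividing q−1 and α ∈ B an element of multiplicative order exactly u. Then the n̄·u field elements α_{w,y,j} = ζ^{d_{w,y}} · α^j, for w ∈ {0, ..., n'−1}, y ∈ {1, ..., m}, and j ∈ {1, ..., u}, are pairwise distinct (so the evaluation-point sets A_{w,y} of Construction 2 are pairwise disjoint). -/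
/-!
Since `α ^ u = 1`, the `u`-th power of `ζ ^ d * α ^ j` is `ζ ^ (d * u)` and forgets `j`.
The exponents `d = d_{w,y}` are distinct because `∏_{i<y} p_i` is a nonzero digit in base `r` that
determines `y`, while `w` counts the zeros that follow it. They are smaller than `l = r ^ n'`, so
`d * u < l * (q - 1) ≤ q ^ l - 1 = orderOf ζ` by Bernoulli's inequality, and the powers
`ζ ^ (d * u)` are distinct. Once `d` is known, cancelling `ζ ^ d` leaves `α ^ j` with
`1 ≤ j ≤ u`, which determines `j`.
-/

section Exponents

theorem injOn_base_pow_mul_digit {ι : Type*} {b : ℕ} {f : ι → ℕ} {s : Set ι} (hf : s.InjOn f)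
    (hpos : ∀ i ∈ s, 0 < f i) (hlt : ∀ i ∈ s, f i < b) :
    Set.InjOn (fun x : ℕ × ι => b ^ x.1 * f x.2) {x | x.2 ∈ s} := by
  have log_eq : ∀ w, ∀ i ∈ s, Nat.log b (b ^ w * f i) = w := fun w i hi =>
    have hb : 0 < b ^ w := pow_pos ((hpos i hi).trans (hlt i hi)) w
    Nat.log_eq_of_pow_le_of_lt_pow (Nat.le_mul_of_pos_right _ (hpos i hi))
      (pow_succ b w ▸ Nat.mul_lt_mul_of_pos_left (hlt i hi) hb)
  rintro ⟨w, i⟩ hi ⟨w', i'⟩ hi' (h : b ^ w * f i = b ^ w' * f i')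
  obtain rfl : w = w' := by rw [← log_eq w i hi, h, log_eq w' i' hi']
  have hb : 0 < b ^ w := pow_pos ((hpos i hi).trans (hlt i hi)) w
  exact congrArg (w, ·) (hf hi hi' (Nat.eq_of_mul_eq_mul_left hb h))

theorem bigP_succ (p : ℕ → ℕ) {y : ℕ} (hy : 1 ≤ y) : bigP p (y + 1) = bigP p y * p y := by
  obtain ⟨k, rfl⟩ := Nat.exists_eq_add_of_le' hy
  exact Finset.prod_Icc_succ_top (by omega) p

variable {p : ℕ → ℕ} {m r : ℕ}

theorem strictMonoOn_bigP (hp : ∀ i ∈ Finset.Icc 1 m, 1 < p i) :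
    StrictMonoOn (bigP p) (Set.Icc 1 (m + 1)) := by
  refine strictMonoOn_of_lt_add_one Set.ordConnected_Icc fun y _ hy hy' => ?_
  rw [bigP_succ p hy.1]
  have hpos : 0 < bigP p y := Finset.prod_pos fun i hi =>
    zero_lt_one.trans (hp i (Finset.Icc_subset_Icc_right (Nat.sub_le_of_le_add hy.2) hi))
  exact lt_mul_of_one_lt_right hpos (hp y (Finset.mem_Icc.2 ⟨hy.1, Nat.le_of_lt_succ hy'.2⟩))

theorem bigP_mem_Ico (hp : ∀ i ∈ Finset.Icc 1 m, 1 < p i) {y : ℕ} (hy : y ∈ Finset.Icc 1 m) :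
    bigP p y ∈ Set.Ico 1 (∏ i ∈ Finset.Icc 1 m, p i) := by
  obtain ⟨hy1, hym⟩ := Finset.mem_Icc.1 hy
  have hmono := strictMonoOn_bigP hp
  have hy' : y ∈ Set.Icc 1 (m + 1) := ⟨hy1, by omega⟩
  exact ⟨hmono.monotoneOn ⟨le_rfl, by omega⟩ hy' hy1, hmono hy' ⟨by omega, le_rfl⟩ (by omega)⟩

theorem injOn_dwy (hp : ∀ i ∈ Finset.Icc 1 m, 1 < p i) (hr : r = ∏ i ∈ Finset.Icc 1 m, p i) :
    Set.InjOn (fun x : ℕ × ℕ => dwy p r x.1 x.2) {x | x.2 ∈ Finset.Icc 1 m} := by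
  have hinj : Set.InjOn (bigP p) (Finset.Icc 1 m) := (strictMonoOn_bigP hp).injOn.mono fun y hy =>
    Set.Icc_subset_Icc_right (Nat.le_succ m) (Finset.mem_Icc.1 hy)
  exact injOn_base_pow_mul_digit hinj (fun y hy => (bigP_mem_Ico hp hy).1)
    fun y hy => hr ▸ (bigP_mem_Ico hp hy).2

theorem dwy_lt_pow (hp : ∀ i ∈ Finset.Icc 1 m, 1 < p i) (hr : r = ∏ i ∈ Finset.Icc 1 m, p i)
    {n w y : ℕ} (hw : w < n) (hy : y ∈ Finset.Icc 1 m) : dwy p r w y < r ^ n := by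
  have hlt : bigP p y < r := hr ▸ (bigP_mem_Ico hp hy).2
  have hr0 : 0 < r := Nat.zero_lt_of_lt hlt
  calc
    r ^ w * bigP p y < r ^ w * r := Nat.mul_lt_mul_of_pos_left hlt (pow_pos hr0 w)
    _ = r ^ (w + 1) := (pow_succ r w).symm
    _ ≤ r ^ n := Nat.pow_le_pow_right hr0 hw

theorem mul_sub_one_le_pow_sub_one (a n : ℕ) : n * (a - 1) ≤ a ^ n - 1 := by
  cases a with
  | zero => simp
  | succ b =>
    have bernoulli : 1 + n * b ≤ (1 + b) ^ n := one_add_le_pow_of_two_add_nonneg (Nat.zero_le _) n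
    rw [Nat.add_sub_cancel, add_comm b 1]
    exact Nat.le_sub_of_add_le' bernoulli

end Exponents

section Monoid

variable {M : Type*} [Monoid M]

theorem pow_injOn_Ico_orderOf (a : M) (k : ℕ) :
    Set.InjOn (a ^ ·) (Set.Ico k (k + orderOf a)) := by
  intro i hi j hj h
  have ha : IsOfFinOrder a := orderOf_pos_iff.1 (by have := hi.1.trans_lt hi.2; omega)
  exact Nat.mod_injOn_Ico k (orderOf a) (Finset.mem_Ico.2 hi) (Finset.mem_Ico.2 hj)
    (ha.pow_inj_mod.1 h)

theorem injOn_mul_of_injOn_pow {ι κ : Type*} {a : ι → M} {b : κ → M} {s : Set ι} {t : Set κ}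
    {n : ℕ} (hcomm : ∀ i ∈ s, ∀ j ∈ t, Commute (a i) (b j)) (hreg : ∀ i ∈ s, IsLeftRegular (a i))
    (ha : s.InjOn fun i => a i ^ n) (hb : t.InjOn b) (hbn : ∀ j ∈ t, b j ^ n = 1) :
    Set.InjOn (fun x : ι × κ => a x.1 * b x.2) (s ×ˢ t) := by
  have mul_pow_eq : ∀ i ∈ s, ∀ j ∈ t, (a i * b j) ^ n = a i ^ n := fun i hi j hj => by
    rw [(hcomm i hi j hj).mul_pow, hbn j hj, mul_one]
  rintro ⟨i, j⟩ ⟨hi, hj⟩ ⟨i', j'⟩ ⟨hi', hj'⟩ (h : a i * b j = a i' * b j')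
  obtain rfl : i = i' := ha hi hi' (by
    simpa only [mul_pow_eq i hi j hj, mul_pow_eq i' hi' j' hj'] using congrArg (· ^ n) h)
  exact congrArg (i, ·) (hb hj hj' (hreg i hi h))

theorem injOn_pow_mul_pow {ι : Type*} {a b : M} (hab : Commute a b) {d : ι → ℕ} {s : Set ι}
    (hd : s.InjOn d) (hlt : ∀ i ∈ s, d i * orderOf b < orderOf a) :
    Set.InjOn (fun x : ι × ℕ => a ^ d x.1 * b ^ x.2) (s ×ˢ Set.Icc 1 (orderOf b)) := by
  rintro x ⟨hxs, hxj⟩ y hy hxy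
  have hb : 0 < orderOf b := Nat.lt_of_lt_of_le hxj.1 hxj.2
  have ha : IsOfFinOrder a := orderOf_pos_iff.1 (Nat.zero_lt_of_lt (hlt x.1 hxs))
  have hpow : s.InjOn fun i => (a ^ d i) ^ orderOf b := fun i hi i' hi' h =>
    hd hi hi' (Nat.eq_of_mul_eq_mul_right hb
      (pow_injOn_Iio_orderOf (hlt i hi) (hlt i' hi') (by simpa only [pow_mul] using h)))
  have hb_inj : Set.InjOn (b ^ ·) (Set.Icc 1 (orderOf b)) :=
    (pow_injOn_Ico_orderOf b 1).mono fun j hj =>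
      Set.mem_Ico.2 ⟨hj.1, by have := hj.2; omega⟩
  exact injOn_mul_of_injOn_pow (fun _ _ _ _ => hab.pow_pow _ _)
    (fun _ _ => (ha.isUnit.pow _).isRegular.left) hpow hb_inj
    (fun j _ => by rw [pow_right_comm, pow_orderOf_eq_one, one_pow]) ⟨hxs, hxj⟩ hy hxy

theorem stmt_16_general {m n u r : ℕ} {p : ℕ → ℕ} (hp : ∀ i ∈ Finset.Icc 1 m, 1 < p i)
    (hr : r = ∏ i ∈ Finset.Icc 1 m, p i) {ζ β : M} (hcomm : Commute ζ β) (hβ : orderOf β = u)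
    (hζ : r ^ n * u ≤ orderOf ζ) :
    Set.InjOn (fun wyj : ℕ × ℕ × ℕ => ζ ^ dwy p r wyj.1 wyj.2.1 * β ^ wyj.2.2)
      {wyj : ℕ × ℕ × ℕ | wyj.1 < n ∧ wyj.2.1 ∈ Finset.Icc 1 m ∧ wyj.2.2 ∈ Finset.Icc 1 u} := by
  subst hβ
  rintro ⟨w, y, j⟩ ⟨hw, hy, hj⟩ ⟨w', y', j'⟩ ⟨hw', hy', hj'⟩ h
  rw [Finset.mem_Icc] at hj hj'
  have hu : 0 < orderOf β := Nat.lt_of_lt_of_le hj.1 hj.2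
  have hd : Set.InjOn (fun x : ℕ × ℕ => dwy p r x.1 x.2) {x | x.1 < n ∧ x.2 ∈ Finset.Icc 1 m} :=
    (injOn_dwy hp hr).mono fun _ hx => hx.2
  have hinj := injOn_pow_mul_pow hcomm hd fun x hx =>
    (Nat.mul_lt_mul_of_pos_right (dwy_lt_pow hp hr hx.1 hx.2) hu).trans_le hζ
  have hpairs : ((w, y), j) = ((w', y'), j') :=
    @hinj ((w, y), j) ⟨⟨hw, hy⟩, hj⟩ ((w', y'), j') ⟨⟨hw', hy'⟩, hj'⟩ h
  simpa only [Prod.mk.injEq, and_assoc] using hpairs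

end Monoid

/-- **evaluation points of Construction 2 are distinct.** Let
`B = GF(q)`, primes `p 1, …, p m` (`m ≥ 2`), `r = p 1 ⋯ p m`, `n' ≥ 2`,
`n̄ = n'm`, `l = r^{n'}`, `F = GF(q^l)`, `ζ` primitive in `F`, `u > 0` a divisor
of `q - 1`, and `α ∈ B` of multiplicative order exactly `u`.  Then the `n̄·u`
elements `α_{w,y,j} = ζ^{d_{w,y}} · α^j` for `w ∈ {0, …, n'-1}`,
`y ∈ {1, …, m}`, `j ∈ {1, …, u}` are pairwise distinct. -/
theorem stmt_16 (q m : ℕ) (hm : 2 ≤ m) (p : ℕ → ℕ)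
    (hp : ∀ i ∈ Finset.Icc 1 m, (p i).Prime)
    (r : ℕ) (hr : r = ∏ i ∈ Finset.Icc 1 m, p i)
    (n' : ℕ) (hn' : 2 ≤ n') (l : ℕ) (hl : l = r ^ n')
    (B F : Type*) [Field B] [Field F] [Fintype B] [Fintype F] [Algebra B F]
    (hq : Fintype.card B = q) (hrk : Module.finrank B F = l)
    (ζ : F) (hζ : orderOf ζ = q ^ l - 1)
    (u : ℕ) (hu : 0 < u) (hdvd : u ∣ q - 1)
    (α : B) (hα : orderOf α = u) :
    Set.InjOn
      (fun wyj : ℕ × ℕ × ℕ => ζ ^ dwy p r wyj.1 wyj.2.1 * (algebraMap B F α) ^ wyj.2.2)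
      {wyj : ℕ × ℕ × ℕ | wyj.1 < n' ∧ wyj.2.1 ∈ Finset.Icc 1 m ∧
        wyj.2.2 ∈ Finset.Icc 1 u} := by
  have hu_le : u ≤ q - 1 := Nat.le_of_dvd (Nat.sub_pos_of_lt (hq ▸ Fintype.one_lt_card)) hdvd
  exact stmt_16_general (fun i hi => (hp i hi).one_lt) hr (Commute.all _ _)
    ((orderOf_injective (algebraMap B F : B →* F) (algebraMap B F).injective α).trans hα)
    (hζ ▸ hl ▸ (Nat.mul_le_mul_left l hu_le).trans (mul_sub_one_le_pow_sub_one q l))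
end
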